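/- Let H be a 2-vertex-connected undirected graph with a DFS tree T rooted at r, and let u and v be vertices with u ≠ r, v ≠ r and p(v) ≠ r, such that v is an ancestor of u and M_p(v) is a descendant of u. Then M_p(v) is a descendant of M(u). -/

import Mathlib

/-- A DFS tree of the graph `H`, rooted at `r`, given by a parent function:
it is a spanning tree (every vertex reaches the root by iterating the parent
function, and each non-root vertex is adjacent to its parent), and every edge
of `H` joins a vertex to one of its ancestors. -/
structure DFSTree {V : Type*} (H : SimpleGraph V) (r : V) where
  par : V → V
  par_root : par r = r
  reaches_root : ∀ v : V, ∃ n : ℕ, par^[n] v = r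
  par_adj : ∀ v : V, v ≠ r → H.Adj v (par v)
  edge_anc : ∀ x y : V, H.Adj x y → (∃ n : ℕ, par^[n] x = y) ∨ (∃ n : ℕ, par^[n] y = x)

namespace DFSTree

variable {V : Type*} {H : SimpleGraph V} {r : V} (T : DFSTree H r)

/-- `a` is an ancestor of `b` (every vertex is an ancestor of itself). -/
def Anc (a b : V) : Prop := ∃ n : ℕ, T.par^[n] b = a

/-- `a` is a proper ancestor of `b`. -/
def PAnc (a b : V) : Prop := T.Anc a b ∧ a ≠ b

/-- `(x,y)` is a back-edge: an edge of `H` from `x` to an ancestor `y` of `x`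
which is not the tree edge from `x` to its parent. -/
def BackEdge (x y : V) : Prop := H.Adj x y ∧ T.Anc y x ∧ T.par x ≠ y

/-- The set of descendants of `v` joined by a back-edge to a proper ancestor of `v`. -/
def MSet (v : V) : Set V := {x | T.Anc v x ∧ ∃ y, T.PAnc y v ∧ T.BackEdge x y}

/-- `m = M(v)`: `m` is the nearest common ancestor of all descendants of `v`
joined by a back-edge to a proper ancestor of `v`. -/
def IsM (v m : V) : Prop :=
  (∀ x ∈ T.MSet v, T.Anc m x) ∧ ∀ m' : V, (∀ x ∈ T.MSet v, T.Anc m' x) → T.Anc m' m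

/-- The set of descendants of `v` joined by a back-edge to a proper ancestor of `p(v)`. -/
def MpSet (v : V) : Set V := {x | T.Anc v x ∧ ∃ y, T.PAnc y (T.par v) ∧ T.BackEdge x y}

/-- `m = M_p(v)`: `m` is the nearest common ancestor of all descendants of `v`
joined by a back-edge to a proper ancestor of `p(v)`. -/
def IsMp (v m : V) : Prop :=
  (∀ x ∈ T.MpSet v, T.Anc m x) ∧ ∀ m' : V, (∀ x ∈ T.MpSet v, T.Anc m' x) → T.Anc m' m

/-- `h = high(v)`: `h` is the deepest proper ancestor of `v` joined by a
back-edge to a descendant of `v`. -/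
def IsHigh (v h : V) : Prop :=
  T.PAnc h v ∧ (∃ x, T.Anc v x ∧ T.BackEdge x h) ∧
    ∀ h' : V, T.PAnc h' v → (∃ x, T.Anc v x ∧ T.BackEdge x h') → T.Anc h' h

/-- `h = high_p(v)`: `h` is the deepest proper ancestor of `p(v)` joined by a
back-edge to a descendant of `v`. -/
def IsHighP (v h : V) : Prop :=
  T.PAnc h (T.par v) ∧ (∃ x, T.Anc v x ∧ T.BackEdge x h) ∧
    ∀ h' : V, T.PAnc h' (T.par v) → (∃ x, T.Anc v x ∧ T.BackEdge x h') → T.Anc h' h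

/-- `l = low(v)`: `l` is the proper ancestor of `v` nearest to the root joined
by a back-edge to a descendant of `v`. -/
def IsLow (v l : V) : Prop :=
  T.PAnc l v ∧ (∃ x, T.Anc v x ∧ T.BackEdge x l) ∧
    ∀ l' : V, T.PAnc l' v → (∃ x, T.Anc v x ∧ T.BackEdge x l') → T.Anc l l'

end DFSTree

/-- `{v, e}` is a vertex-edge cut-pair of `H`: `e` is an edge of `H` and deleting
both `v` (with its incident edges) and `e` disconnects `H`. -/
def VECutPair {V : Type*} (H : SimpleGraph V) (v : V) (e : Sym2 V) : Prop :=
  e ∈ H.edgeSet ∧ ¬ ((H.deleteEdges {e}).induce {u | u ≠ v}).Connected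

/-- `{e, e'}` is a cut-pair of `H`: `e` and `e'` are distinct edges of `H` whose
deletion disconnects `H`. -/
def ECutPair {V : Type*} (H : SimpleGraph V) (e e' : Sym2 V) : Prop :=
  e ∈ H.edgeSet ∧ e' ∈ H.edgeSet ∧ e ≠ e' ∧ ¬ (H.deleteEdges {e, e'}).Connected

/-- An undirected graph is 2-edge-connected if it is connected and has no bridge. -/
def TwoEdgeConnected {W : Type*} (G : SimpleGraph W) : Prop :=
  G.Connected ∧ ∀ e ∈ G.edgeSet, ¬ G.IsBridge e

/-- An undirected graph is 2-vertex-connected if it has at least three vertices,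
is connected, and deleting any single vertex leaves it connected. -/
def TwoVertexConnected {W : Type*} (G : SimpleGraph W) : Prop :=
  3 ≤ Nat.card W ∧ G.Connected ∧ ∀ v : W, (G.induce {u | u ≠ v}).Connected

/-!
Every vertex `x` in the set defining `M_p(v)` is a descendant of `M_p(v)`, hence of `u`, and it has
a back-edge to a proper ancestor of `p(v)`, hence of `u`. So `x` is also in the set defining `M(u)`,
and `M(u)` is a common ancestor of the set whose nearest common ancestor is `M_p(v)`.
-/

namespace DFSTree

open Function

variable {V : Type*} {H : SimpleGraph V} {r : V} {T : DFSTree H r} {a b c u v x : V}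

theorem anc_par_self (v : V) : T.Anc (T.par v) v := ⟨1, rfl⟩

theorem Anc.trans (hab : T.Anc a b) (hbc : T.Anc b c) : T.Anc a c := by
  obtain ⟨m, rfl⟩ := hab
  obtain ⟨n, rfl⟩ := hbc
  exact ⟨m + n, iterate_add_apply _ _ _ _⟩

theorem isFixedPt_par_root : IsFixedPt T.par r := T.par_root

theorem eq_root_of_isPeriodicPt_par {n : ℕ} (hn : 0 < n) (hv : IsPeriodicPt T.par n v) :
    v = r := by
  obtain ⟨k, hk⟩ := T.reaches_root v
  have hr : IsFixedPt T.par^[k] r := isFixedPt_par_root.iterate k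
  exact (hv.iterate k).eq_of_apply_eq_same (hr.isPeriodicPt n) hn (hk.trans hr.eq.symm)

theorem Anc.antisymm (hab : T.Anc a b) (hba : T.Anc b a) : a = b := by
  obtain ⟨m, rfl⟩ := hab
  obtain ⟨n, hn⟩ := hba
  rcases Nat.eq_zero_or_pos m with rfl | hm
  · rfl
  · have hb : IsPeriodicPt T.par (n + m) b := (iterate_add_apply _ n m b).trans hn
    obtain rfl : b = r := eq_root_of_isPeriodicPt_par (Nat.add_pos_right n hm) hb
    exact isFixedPt_par_root.iterate m

theorem PAnc.trans_anc (hab : T.PAnc a b) (hbc : T.Anc b c) : T.PAnc a c := by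
  refine ⟨hab.1.trans hbc, ?_⟩
  rintro rfl
  exact hab.2 (hab.1.antisymm hbc)

theorem mem_mSet_of_mem_mpSet (hvu : T.Anc (T.par v) u) (hux : T.Anc u x) (hx : x ∈ T.MpSet v) :
    x ∈ T.MSet u := by
  obtain ⟨-, y, hy, hxy⟩ := hx
  exact ⟨hux, y, hy.trans_anc hvu, hxy⟩

end DFSTree

theorem stmt_9_general {V : Type*} {H : SimpleGraph V} {r : V} {T : DFSTree H r} {u v mu mv : V}
    (hmu : T.IsM u mu) (hmv : T.IsMp v mv) (hanc : T.Anc (T.par v) u) (hdesc : T.Anc u mv) :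
    T.Anc mu mv := by
  refine hmv.2 mu fun x hx => hmu.1 x ?_
  have hux : T.Anc u x := hdesc.trans (hmv.1 x hx)
  exact DFSTree.mem_mSet_of_mem_mpSet hanc hux hx

theorem stmt_9 {V : Type*} [Fintype V] (H : SimpleGraph V) (r : V)
    (T : DFSTree H r) (hH : TwoVertexConnected H) (u v mu mv : V)
    (hu : u ≠ r) (hv : v ≠ r) (hpv : T.par v ≠ r)
    (hmu : T.IsM u mu) (hmv : T.IsMp v mv)
    (hanc : T.Anc v u) (hdesc : T.Anc u mv) :
    T.Anc mu mv :=
  stmt_9_general hmu hmv ((DFSTree.anc_par_self v).trans hanc) hdesc
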